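/- arXiv:1505.02292 — 2 statements merged into one kernel-verified Lean document; each statement's English description precedes it below -/
import Mathlib

section
/- Let (Ω, ℱ, F) be a probability space, α ∈ (0,1), and L an integrable real-valued random variable on Ω. If G is a probability measure on (Ω, ℱ) with G ≪ F and dG/dF ≤ 1/(1-α) F-almost surely, then E_G[L] ≤ CVaR_α(L). -/
/-!
Put `q = VaR_α(L)` and `c = 1/(1-α)`. Since `L ≤ q + (L - q)⁺` and `G ≤ c • F`,
`E_G[L] ≤ q + c * E_F[(L - q)⁺]`. The quantile function `ξ ↦ VaR_ξ(L)` pushes Lebesgue measure on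
`(0,1)` forward to the law of `L` under `F` (`map_VaR`), because `VaR_ξ(L) ≤ x ↔ ξ ≤ F(L ≤ x)`
(`VaR_le_iff`). Hence `E_F[(L - q)⁺] = ∫₀¹ (VaR_ξ - q)⁺ dξ`, and monotonicity of the quantile
function turns this into `∫_α^1 VaR_ξ dξ - (1 - α) q`, which gives the claim.
-/

open MeasureTheory Set

/-- Value-at-Risk at level `ξ`: the infimum of `x` such that `F(L ≤ x) ≥ ξ`. -/
noncomputable def VaR {Ω : Type*} [MeasurableSpace Ω] (F : Measure Ω) (L : Ω → ℝ) (ξ : ℝ) : ℝ :=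
  sInf {x : ℝ | ξ ≤ (F {ω | L ω ≤ x}).toReal}

/-- Conditional Value-at-Risk at level `α`: `(1/(1-α)) ∫_α^1 VaR_ξ(L) dξ`. -/
noncomputable def CVaR {Ω : Type*} [MeasurableSpace Ω] (F : Measure Ω) (L : Ω → ℝ) (α : ℝ) : ℝ :=
  (1 - α)⁻¹ * ∫ ξ in α..1, VaR F L ξ

open ProbabilityTheory Filter Topology

section Quantile

variable {Ω : Type*} [MeasurableSpace Ω] {F : Measure Ω} [IsProbabilityMeasure F] {L : Ω → ℝ}

lemma VaR_eq_sInf_cdf (hLm : Measurable L) (ξ : ℝ) :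
    VaR F L ξ = sInf {x : ℝ | ξ ≤ cdf (F.map L) x} := by
  have : IsProbabilityMeasure (F.map L) := Measure.isProbabilityMeasure_map hLm.aemeasurable
  unfold VaR
  congr 1
  ext x
  rw [mem_ofPred_eq, mem_ofPred_eq, cdf_eq_real, measureReal_def,
    Measure.map_apply hLm measurableSet_Iic]
  rfl

/-- The quantile function and the distribution function form a Galois connection on `(0,1)`. The
infimum defining `VaR` is attained by right-continuity of the distribution function; `ξ > 0` and
`ξ < 1` make the set bounded below and nonempty. -/
lemma VaR_le_iff (hLm : Measurable L) {ξ : ℝ} (hξ : ξ ∈ Ioo (0 : ℝ) 1) (x : ℝ) :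
    VaR F L ξ ≤ x ↔ ξ ≤ cdf (F.map L) x := by
  rw [VaR_eq_sInf_cdf hLm]
  set S := {x : ℝ | ξ ≤ cdf (F.map L) x} with hS
  have hne : S.Nonempty :=
    ((tendsto_cdf_atTop (F.map L)).eventually (eventually_ge_nhds hξ.2)).exists
  have hbdd : BddBelow S := by
    obtain ⟨b, hb⟩ :=
      ((tendsto_cdf_atBot (F.map L)).eventually (eventually_lt_nhds hξ.1)).exists
    refine ⟨b, fun y hy => ?_⟩
    by_contra! hlt
    exact absurd (hy.trans (monotone_cdf _ hlt.le)) (not_le.mpr hb)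
  constructor
  · intro h
    have hright : ContinuousWithinAt (cdf (F.map L)) (Ioi x) x :=
      ((cdf (F.map L)).right_continuous x).mono Ioi_subset_Ici_self
    refine ge_of_tendsto hright ?_
    filter_upwards [self_mem_nhdsWithin] with y hy
    obtain ⟨z, hz, hzy⟩ := (csInf_lt_iff hbdd hne).1 (h.trans_lt hy)
    exact le_trans hz (monotone_cdf _ hzy.le)
  · intro h
    exact csInf_le hbdd h

lemma VaR_monotoneOn (hLm : Measurable L) : MonotoneOn (VaR F L) (Ioo (0 : ℝ) 1) := by
  intro ξ hξ η hη h
  rw [VaR_le_iff hLm hξ]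
  exact h.trans ((VaR_le_iff hLm hη _).1 le_rfl)

lemma aemeasurable_VaR (hLm : Measurable L) :
    AEMeasurable (VaR F L) (volume.restrict (Ioo (0 : ℝ) 1)) :=
  aemeasurable_restrict_of_monotoneOn measurableSet_Ioo (VaR_monotoneOn hLm)

/-- The quantile transform: a uniform variable on `(0,1)` inserted into the quantile function has
the law of `L`. -/
lemma map_VaR (hLm : Measurable L) :
    (volume.restrict (Ioo (0 : ℝ) 1)).map (VaR F L) = F.map L := by
  have : IsProbabilityMeasure (F.map L) := Measure.isProbabilityMeasure_map hLm.aemeasurable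
  have hfin : IsFiniteMeasure ((volume.restrict (Ioo (0 : ℝ) 1)).map (VaR F L)) := by
    infer_instance
  refine Measure.ext_of_Iic _ _ fun x => ?_
  rw [Measure.map_apply_of_aemeasurable (aemeasurable_VaR hLm) measurableSet_Iic]
  have hset : (VaR F L ⁻¹' Iic x) ∩ Ioo (0 : ℝ) 1 = Iic (cdf (F.map L) x) ∩ Ioo 0 1 := by
    ext ξ
    exact and_congr_left fun hξ => VaR_le_iff hLm hξ x
  -- Endpoints are Lebesgue-null, so the trace of `Iic (cdf x)` on `(0,1)` has the measure of
  -- `Ioc 0 (cdf x)`.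
  rw [Measure.restrict_apply' measurableSet_Ioo, hset, ← Measure.restrict_apply' measurableSet_Ioo,
    restrict_Ioo_eq_restrict_Ioc, Measure.restrict_apply' measurableSet_Ioc, inter_comm,
    Ioc_inter_Iic, min_eq_right (cdf_le_one _ x), Real.volume_Ioc, sub_zero, ofReal_cdf]

lemma integrableOn_VaR (hLm : Measurable L) (hL : Integrable L F) :
    IntegrableOn (VaR F L) (Ioo (0 : ℝ) 1) := by
  have h : Integrable id (F.map L) :=
    (integrable_map_measure aestronglyMeasurable_id hLm.aemeasurable).2 hL
  rw [← map_VaR hLm] at h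
  exact (integrable_map_measure aestronglyMeasurable_id (aemeasurable_VaR hLm)).1 h

/-- The tail identity `E_F[(L - q)⁺] = ∫_α^1 VaR_ξ dξ - (1 - α) q` at the quantile
`q = VaR_α(L)`. -/
lemma integral_excess_eq (hLm : Measurable L) (hL : Integrable L F) {α : ℝ}
    (hα : α ∈ Ioo (0 : ℝ) 1) :
    ∫ ω, max (L ω - VaR F L α) 0 ∂F
      = (∫ ξ in α..1, VaR F L ξ) - (1 - α) * VaR F L α := by
  set q := VaR F L α with hq
  have hg : Measurable fun x : ℝ => max (x - q) 0 := by fun_prop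
  have hsub : Ioo α 1 ⊆ Ioo (0 : ℝ) 1 := Ioo_subset_Ioo_left hα.1.le
  calc ∫ ω, max (L ω - q) 0 ∂F
      = ∫ x, max (x - q) 0 ∂(F.map L) :=
        (integral_map hLm.aemeasurable hg.aestronglyMeasurable).symm
    _ = ∫ ξ in Ioo (0 : ℝ) 1, max (VaR F L ξ - q) 0 := by
        rw [← map_VaR hLm]
        exact integral_map (aemeasurable_VaR hLm) hg.aestronglyMeasurable
    _ = ∫ ξ in Ioo α 1, max (VaR F L ξ - q) 0 := by
        refine setIntegral_eq_of_subset_of_forall_sdiff_eq_zero measurableSet_Ioo hsub ?_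
        rintro ξ ⟨hξ, hξα⟩
        have hle : ξ ≤ α := by
          by_contra! h
          exact hξα ⟨h, hξ.2⟩
        exact max_eq_right (sub_nonpos.2 (VaR_monotoneOn hLm hξ hα hle))
    _ = ∫ ξ in Ioo α 1, (VaR F L ξ - q) := by
        refine setIntegral_congr_fun measurableSet_Ioo fun ξ hξ => ?_
        exact max_eq_left (sub_nonneg.2 (VaR_monotoneOn hLm hα (hsub hξ) hξ.1.le))
    _ = (∫ ξ in α..1, VaR F L ξ) - (1 - α) * q := by
        rw [integral_sub ((integrableOn_VaR hLm hL).mono_set hsub) (integrable_const _),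
          intervalIntegral.integral_of_le hα.2.le, integral_Ioc_eq_integral_Ioo]
        simp [measureReal_def, hα.2.le]

end Quantile

lemma measure_le_smul_of_rnDeriv_le {Ω : Type*} [MeasurableSpace Ω] {F G : Measure Ω}
    [IsProbabilityMeasure F] [IsProbabilityMeasure G] (hGF : G ≪ F) {c : ENNReal}
    (hbound : ∀ᵐ ω ∂F, G.rnDeriv F ω ≤ c) : G ≤ c • F := by
  rw [← Measure.withDensity_rnDeriv_eq G F hGF, ← withDensity_const]
  exact withDensity_mono hbound

/-- If `G` is a probability measure absolutely continuous w.r.t. `F` with density bounded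
`F`-a.s. by `1/(1-α)`, then `E_G[L] ≤ CVaR_α(L)`. -/
theorem expectation_le_cvar {Ω : Type*} [MeasurableSpace Ω] (F : Measure Ω)
    [IsProbabilityMeasure F] (α : ℝ) (hα : α ∈ Set.Ioo (0 : ℝ) 1)
    (L : Ω → ℝ) (hLm : Measurable L) (hL : Integrable L F)
    (G : Measure Ω) [IsProbabilityMeasure G] (hGF : G ≪ F)
    (hbound : ∀ᵐ ω ∂F, G.rnDeriv F ω ≤ ENNReal.ofReal (1 / (1 - α))) :
    ∫ ω, L ω ∂G ≤ CVaR F L α := by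
  have hα1 : 0 < 1 - α := sub_pos.2 hα.2
  set q := VaR F L α with hq
  have hle := measure_le_smul_of_rnDeriv_le hGF hbound
  have hLG : Integrable L G := hL.of_measure_le_smul ENNReal.ofReal_ne_top hle
  have hexF : Integrable (fun ω => max (L ω - q) 0) F :=
    (hL.sub (integrable_const q)).pos_part
  have hexG : Integrable (fun ω => max (L ω - q) 0) G :=
    (hLG.sub (integrable_const q)).pos_part
  calc ∫ ω, L ω ∂G
      ≤ ∫ ω, (q + max (L ω - q) 0) ∂G := by
        refine integral_mono hLG ((integrable_const q).add hexG) fun ω => ?_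
        linarith [le_max_left (L ω - q) 0]
    _ = q + ∫ ω, max (L ω - q) 0 ∂G := by
        rw [integral_add (integrable_const q) hexG]
        simp
    _ ≤ q + ∫ ω, max (L ω - q) 0 ∂(ENNReal.ofReal (1 / (1 - α)) • F) := by
        refine add_le_add le_rfl ?_
        exact integral_mono_measure hle (ae_of_all _ fun ω => le_max_right _ _)
          (hexF.smul_measure ENNReal.ofReal_ne_top)
    _ = q + (1 - α)⁻¹ * ∫ ω, max (L ω - q) 0 ∂F := by
        rw [integral_smul_measure, ENNReal.toReal_ofReal (by positivity), one_div, smul_eq_mul]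
    _ = CVaR F L α := by
        rw [integral_excess_eq hLm hL hα, CVaR]
        field_simp
        ring
end

section
/- Let α ∈ (0,1), let M, N be positive integers, let p ∈ ℝ^M and q ∈ ℝ^N be probability vectors, and let L ∈ ℝ^{M×N} be a loss matrix. Then max over joint probability matrices ψ ∈ ℝ^{M×N} with row sums p and column sums q of CVaR_α of the discrete random loss taking value L_{mn} with probability ψ_{mn} equals the optimal value of the linear program: maximize (1/(1-α)) Σ_{m,n} L_{mn} μ_{mn} over pairs (ψ, μ) of M×N matrices subject to Σ_n ψ_{mn} = p_m for all m, Σ_m ψ_{mn} = q_n for all n, Σ_{m,n} μ_{mn} = 1-α, ψ_{mn} ≥ 0, and 0 ≤ μ_{mn} ≤ ψ_{mn} for all m, n; moreover both maxima are attained. -/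
/-!
For a finite discrete loss, `VaR_ξ ≤ x ↔ ξ ≤ F x` for `ξ ∈ (0, 1]` (`VaRcdf_le_iff`), so the quantile
function pushes the uniform law on `(0, 1]` forward to the law of the loss (`map_VaRcdf`).
Integrating `y ↦ (y - v)⁺` with `v = VaR_α` against both laws gives the Rockafellar–Uryasev identity
`∫_α^1 VaR_ξ dξ = (1 - α) v + ∑ ψ (L - v)⁺` (`integral_VaRcdf`).

Every `0 ≤ μ ≤ ψ` of total mass `1 - α` satisfies
`∑ L μ = (1 - α) v + ∑ (L - v) μ ≤ (1 - α) v + ∑ ψ (L - v)⁺`, with equality when `μ` is `ψ` above `v`,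
vanishes below `v`, and takes the appropriate fraction of `ψ` at `v`. Hence, for fixed `ψ`, CVaR is the
maximum of the LP objective over `μ`. The LP feasible set is compact and nonempty (it contains the
independent coupling `p ⊗ q`), so the LP maximum is attained, and its `ψ`-component is a worst case
for CVaR.
-/

open Finset Set

/-- Value-at-Risk at level `ξ` for a loss with cumulative distribution function `cdf`. -/
noncomputable def VaRcdf (cdf : ℝ → ℝ) (ξ : ℝ) : ℝ :=
  sInf {x : ℝ | ξ ≤ cdf x}

/-- Conditional Value-at-Risk at level `α`: `(1/(1-α)) ∫_α^1 VaR_ξ dξ`. -/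
noncomputable def CVaRcdf (cdf : ℝ → ℝ) (α : ℝ) : ℝ :=
  (1 - α)⁻¹ * ∫ ξ in α..1, VaRcdf cdf ξ

/-- The cumulative distribution function of a discrete random loss taking value `L m n`
with probability `ψ m n`. -/
noncomputable def jointCDF {M N : ℕ} (ψ L : Fin M → Fin N → ℝ) (x : ℝ) : ℝ :=
  ∑ m, ∑ n, if L m n ≤ x then ψ m n else 0

open MeasureTheory

/-! ### Quantiles of a finite discrete loss -/

section Discrete

variable {ι : Type*} [Fintype ι]

/-- Cumulative distribution function of the loss with value `L i` with probability `ψ i`, over an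
arbitrary finite index type. -/
noncomputable def discCDF (ψ L : ι → ℝ) (x : ℝ) : ℝ :=
  ∑ i, if L i ≤ x then ψ i else 0

lemma discCDF_mono {ψ : ι → ℝ} (hψ : ∀ i, 0 ≤ ψ i) (L : ι → ℝ) : Monotone (discCDF ψ L) := by
  intro x y hxy
  refine Finset.sum_le_sum fun i _ => ?_
  have := hψ i
  split_ifs <;> linarith

lemma discCDF_le_one {ψ : ι → ℝ} (hψ : ∀ i, 0 ≤ ψ i) (hs : ∑ i, ψ i = 1) (L : ι → ℝ) (x : ℝ) :
    discCDF ψ L x ≤ 1 := by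
  rw [← hs]
  refine Finset.sum_le_sum fun i _ => ?_
  have := hψ i
  split_ifs <;> linarith

/-- Superlevel sets of the distribution function are closed: such a set is the finite union, over the
index sets `A` of mass at least `ξ`, of the rays `{x | ∀ i ∈ A, L i ≤ x}`. -/
lemma isClosed_superlevel {ψ : ι → ℝ} (hψ : ∀ i, 0 ≤ ψ i) (L : ι → ℝ) (ξ : ℝ) :
    IsClosed {x : ℝ | ξ ≤ discCDF ψ L x} := by
  classical
  have h : {x : ℝ | ξ ≤ discCDF ψ L x} =
      ⋃ A ∈ {A : Finset ι | ξ ≤ ∑ i ∈ A, ψ i}, {x : ℝ | ∀ i ∈ A, L i ≤ x} := by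
    ext x
    simp only [Set.mem_ofPred_eq, Set.mem_iUnion, exists_prop]
    constructor
    · intro hx
      refine ⟨Finset.univ.filter fun i => L i ≤ x, ?_, fun i hi => (Finset.mem_filter.1 hi).2⟩
      rwa [Finset.sum_filter]
    · rintro ⟨A, hA, hx⟩
      refine hA.trans ?_
      unfold discCDF
      rw [← Finset.sum_filter]
      refine Finset.sum_le_sum_of_subset_of_nonneg (fun i hi => ?_) (fun i _ _ => hψ i)
      simpa using hx i hi
  rw [h]
  refine Set.Finite.isClosed_biUnion (Set.toFinite _) fun A _ => ?_
  simp only [Set.ofPred_forall]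
  exact isClosed_biInter fun i _ => isClosed_Ici

lemma superlevel_nonempty {ψ : ι → ℝ} (hs : ∑ i, ψ i = 1) (L : ι → ℝ)
    {ξ : ℝ} (hξ : ξ ≤ 1) : {x : ℝ | ξ ≤ discCDF ψ L x}.Nonempty := by
  obtain ⟨B, hB⟩ := (Set.finite_range L).bddAbove
  refine ⟨B, ?_⟩
  have : discCDF ψ L B = 1 := by
    rw [← hs]
    refine Finset.sum_congr rfl fun i _ => if_pos (hB ⟨i, rfl⟩)
  simpa [this] using hξ

lemma superlevel_bddBelow (ψ L : ι → ℝ) {ξ : ℝ} (hξ : 0 < ξ) :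
    BddBelow {x : ℝ | ξ ≤ discCDF ψ L x} := by
  obtain ⟨B, hB⟩ := (Set.finite_range L).bddBelow
  refine ⟨B, fun x hx => ?_⟩
  by_contra! h
  have : discCDF ψ L x = 0 :=
    Finset.sum_eq_zero fun i _ => if_neg (not_le.2 (h.trans_le (hB ⟨i, rfl⟩)))
  rw [Set.mem_ofPred_eq, this] at hx
  linarith

lemma VaRcdf_le_iff {ψ : ι → ℝ} (hψ : ∀ i, 0 ≤ ψ i) (hs : ∑ i, ψ i = 1) (L : ι → ℝ)
    {ξ : ℝ} (h0 : 0 < ξ) (h1 : ξ ≤ 1) (x : ℝ) :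
    VaRcdf (discCDF ψ L) ξ ≤ x ↔ ξ ≤ discCDF ψ L x := by
  constructor
  · intro h
    have := (isClosed_superlevel hψ L ξ).csInf_mem (superlevel_nonempty hs L h1)
      (superlevel_bddBelow ψ L h0)
    exact le_trans this (discCDF_mono hψ L h)
  · intro h
    exact csInf_le (superlevel_bddBelow ψ L h0) h

lemma VaRcdf_monotoneOn {ψ : ι → ℝ} (hψ : ∀ i, 0 ≤ ψ i) (hs : ∑ i, ψ i = 1) (L : ι → ℝ) :
    MonotoneOn (VaRcdf (discCDF ψ L)) (Set.Ioc 0 1) := by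
  intro a ha b hb hab
  rw [VaRcdf_le_iff hψ hs L ha.1 ha.2]
  exact hab.trans ((VaRcdf_le_iff hψ hs L hb.1 hb.2 _).1 le_rfl)

/-! ### The quantile transform and the tail integral -/

/-- The law of the discrete loss, as a measure on `ℝ`. -/
noncomputable def discLaw (ψ L : ι → ℝ) : Measure ℝ :=
  ∑ i, ENNReal.ofReal (ψ i) • Measure.dirac (L i)

lemma discLaw_Iic {ψ : ι → ℝ} (hψ : ∀ i, 0 ≤ ψ i) (L : ι → ℝ) (x : ℝ) :
    discLaw ψ L (Set.Iic x) = ENNReal.ofReal (discCDF ψ L x) := by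
  unfold discLaw discCDF
  rw [ENNReal.ofReal_sum_of_nonneg (fun i _ => by have := hψ i; split_ifs <;> linarith)]
  simp only [Measure.coe_finsetSum, Finset.sum_apply, Measure.smul_apply, smul_eq_mul,
    Measure.dirac_apply' _ measurableSet_Iic]
  refine Finset.sum_congr rfl fun i _ => ?_
  by_cases h : L i ≤ x <;> simp [h]

/-- Quantile transform: under a uniform level, Value-at-Risk has the law of the loss. -/
lemma map_VaRcdf {ψ : ι → ℝ} (hψ : ∀ i, 0 ≤ ψ i) (hs : ∑ i, ψ i = 1) (L : ι → ℝ) :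
    Measure.map (VaRcdf (discCDF ψ L)) (volume.restrict (Set.Ioc 0 1)) = discLaw ψ L := by
  have hm : AEMeasurable (VaRcdf (discCDF ψ L)) (volume.restrict (Set.Ioc (0 : ℝ) 1)) :=
    aemeasurable_restrict_of_monotoneOn measurableSet_Ioc (VaRcdf_monotoneOn hψ hs L)
  refine Measure.ext_of_Iic _ _ fun x => ?_
  rw [discLaw_Iic hψ, Measure.map_apply_of_aemeasurable hm measurableSet_Iic,
    Measure.restrict_apply' measurableSet_Ioc]
  have : VaRcdf (discCDF ψ L) ⁻¹' Set.Iic x ∩ Set.Ioc 0 1 = Set.Ioc 0 (discCDF ψ L x) := by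
    ext ξ
    simp only [Set.mem_inter_iff, Set.mem_preimage, Set.mem_Iic, Set.mem_Ioc]
    constructor
    · rintro ⟨h, h0, h1⟩
      exact ⟨h0, (VaRcdf_le_iff hψ hs L h0 h1 x).1 h⟩
    · rintro ⟨h0, h⟩
      have h1 := h.trans (discCDF_le_one hψ hs L x)
      exact ⟨(VaRcdf_le_iff hψ hs L h0 h1 x).2 h, h0, h1⟩
  rw [this, Real.volume_Ioc, sub_zero]

lemma integrable_discLaw (ψ L : ι → ℝ) {g : ℝ → ℝ} :
    Integrable g (discLaw ψ L) := by
  unfold discLaw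
  rw [integrable_finsetSum_measure]
  intro i _
  exact (integrable_dirac (by simp)).smul_measure ENNReal.ofReal_ne_top

lemma integral_discLaw {ψ : ι → ℝ} (hψ : ∀ i, 0 ≤ ψ i) (L : ι → ℝ) {g : ℝ → ℝ} :
    ∫ y, g y ∂(discLaw ψ L) = ∑ i, ψ i * g (L i) := by
  unfold discLaw
  rw [integral_finsetSum_measure fun i _ =>
    (integrable_dirac (by simp)).smul_measure ENNReal.ofReal_ne_top]
  refine Finset.sum_congr rfl fun i _ => ?_
  rw [integral_smul_measure, integral_dirac, ENNReal.toReal_ofReal (hψ i), smul_eq_mul]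

/-- The Rockafellar–Uryasev representation of the upper-tail integral of Value-at-Risk. -/
lemma integral_VaRcdf {ψ : ι → ℝ} (hψ : ∀ i, 0 ≤ ψ i) (hs : ∑ i, ψ i = 1) (L : ι → ℝ)
    {α : ℝ} (hα : α ∈ Set.Ioo (0 : ℝ) 1) :
    ∫ ξ in α..1, VaRcdf (discCDF ψ L) ξ =
      (1 - α) * VaRcdf (discCDF ψ L) α +
        ∑ i, ψ i * max (L i - VaRcdf (discCDF ψ L) α) 0 := by
  set V := VaRcdf (discCDF ψ L) with hV
  set v := V α with hv
  obtain ⟨h0, h1⟩ := hα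
  have hmono : MonotoneOn V (Set.Ioc 0 1) := VaRcdf_monotoneOn hψ hs L
  have hm : AEMeasurable V (volume.restrict (Set.Ioc (0 : ℝ) 1)) :=
    aemeasurable_restrict_of_monotoneOn measurableSet_Ioc hmono
  have hg : Measurable fun y : ℝ => max (y - v) 0 := by fun_prop
  have hint : IntegrableOn (fun ξ => max (V ξ - v) 0) (Set.Ioc 0 1) := by
    have := integrable_discLaw ψ L (g := fun y : ℝ => max (y - v) 0)
    rw [← map_VaRcdf hψ hs L] at this
    exact (integrable_map_measure hg.aestronglyMeasurable hm).1 this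
  have key : ∫ ξ in Set.Ioc 0 1, max (V ξ - v) 0 = ∑ i, ψ i * max (L i - v) 0 := by
    rw [← integral_discLaw hψ L (g := fun y : ℝ => max (y - v) 0), ← map_VaRcdf hψ hs L,
      integral_map hm hg.aestronglyMeasurable]
  rw [← intervalIntegral.integral_of_le zero_le_one,
    ← intervalIntegral.integral_add_adjacent_intervals (b := α)] at key
  rotate_left
  · rw [intervalIntegrable_iff_integrableOn_Ioc_of_le h0.le]
    exact hint.mono_set (Set.Ioc_subset_Ioc_right h1.le)
  · rw [intervalIntegrable_iff_integrableOn_Ioc_of_le h1.le]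
    exact hint.mono_set (Set.Ioc_subset_Ioc_left h0.le)
  have e1 : ∫ ξ in (0 : ℝ)..α, max (V ξ - v) 0 = 0 := by
    rw [intervalIntegral.integral_of_le h0.le]
    refine setIntegral_eq_zero_of_forall_eq_zero fun ξ hξ => ?_
    have := hmono ⟨hξ.1, hξ.2.trans h1.le⟩ ⟨h0, h1.le⟩ hξ.2
    exact max_eq_right (by linarith)
  have hVi : IntervalIntegrable V volume α 1 := by
    refine MonotoneOn.intervalIntegrable (hmono.mono ?_)
    rw [Set.uIcc_of_le h1.le]
    exact fun ξ hξ => ⟨h0.trans_le hξ.1, hξ.2⟩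
  have e2 : ∫ ξ in α..1, max (V ξ - v) 0 = (∫ ξ in α..1, V ξ) - (1 - α) * v := by
    rw [show (1 - α) * v = ∫ _ in α..1, v by simp,
      ← intervalIntegral.integral_sub hVi intervalIntegrable_const]
    refine intervalIntegral.integral_congr fun ξ hξ => ?_
    rw [Set.uIcc_of_le h1.le] at hξ
    have := hmono ⟨h0, h1.le⟩ ⟨h0.trans_le hξ.1, hξ.2⟩ hξ.1
    exact max_eq_left (by linarith)
  rw [e1, e2] at key
  linarith

/-! ### The tail integral as a maximum over sub-probabilities -/

lemma sum_mul_le_integral_VaRcdf {ψ : ι → ℝ} (hψ : ∀ i, 0 ≤ ψ i) (hs : ∑ i, ψ i = 1) (L : ι → ℝ)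
    {α : ℝ} (hα : α ∈ Set.Ioo (0 : ℝ) 1) {μ : ι → ℝ} (hμ : ∀ i, 0 ≤ μ i ∧ μ i ≤ ψ i)
    (hμs : ∑ i, μ i = 1 - α) :
    ∑ i, L i * μ i ≤ ∫ ξ in α..1, VaRcdf (discCDF ψ L) ξ := by
  rw [integral_VaRcdf hψ hs L hα, ← hμs, Finset.sum_mul, ← Finset.sum_add_distrib]
  refine Finset.sum_le_sum fun i _ => ?_
  set v := VaRcdf (discCDF ψ L) α
  have h1 : (L i - v) * μ i ≤ max (L i - v) 0 * μ i :=
    mul_le_mul_of_nonneg_right (le_max_left _ _) (hμ i).1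
  have h2 : max (L i - v) 0 * μ i ≤ max (L i - v) 0 * ψ i :=
    mul_le_mul_of_nonneg_left (hμ i).2 (le_max_right _ _)
  linarith

lemma exists_sum_mul_eq_integral_VaRcdf {ψ : ι → ℝ} (hψ : ∀ i, 0 ≤ ψ i) (hs : ∑ i, ψ i = 1)
    (L : ι → ℝ) {α : ℝ} (hα : α ∈ Set.Ioo (0 : ℝ) 1) :
    ∃ μ : ι → ℝ, (∀ i, 0 ≤ μ i ∧ μ i ≤ ψ i) ∧ ∑ i, μ i = 1 - α ∧
      ∑ i, L i * μ i = ∫ ξ in α..1, VaRcdf (discCDF ψ L) ξ := by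
  obtain ⟨v, hv⟩ : ∃ v, v = VaRcdf (discCDF ψ L) α := ⟨_, rfl⟩
  have hF : α ≤ discCDF ψ L v := (VaRcdf_le_iff hψ hs L hα.1 hα.2.le v).1 hv.ge
  -- `a = P(X > v)`, `b = P(X = v)`; the tail of mass `1 - α` takes a fraction of the atom at `v`.
  set a := ∑ i, if v < L i then ψ i else 0 with ha
  set b := ∑ i, if L i = v then ψ i else 0 with hb
  have hb0 : 0 ≤ b := Finset.sum_nonneg fun i _ => by have := hψ i; split_ifs <;> linarith
  have ha1 : a = 1 - discCDF ψ L v := by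
    rw [← hs, discCDF, ← Finset.sum_sub_distrib]
    refine Finset.sum_congr rfl fun i _ => ?_
    by_cases h : L i ≤ v
    · simp [h, not_lt.2 h]
    · simp [h, not_le.1 h]
  -- The mass strictly below `v` is the value of the distribution function at some `x < v`, hence
  -- less than `α`.
  have hlt : (∑ i, if L i < v then ψ i else 0) ≤ α := by
    by_contra! hc
    obtain ⟨x, hxv, hx⟩ : ∃ x < v, ∀ i, L i < v → L i ≤ x := by
      classical
      rcases (Finset.univ.filter fun i => L i < v).eq_empty_or_nonempty with he | hne
      · refine ⟨v - 1, by linarith, fun i hi => ?_⟩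
        have : i ∈ Finset.univ.filter fun i => L i < v := by simpa using hi
        simp [he] at this
      · obtain ⟨j, hj, hmax⟩ := Finset.exists_max_image _ L hne
        exact ⟨L j, (Finset.mem_filter.1 hj).2, fun i hi => hmax i (by simpa using hi)⟩
    have h2 : (∑ i, if L i < v then ψ i else 0) ≤ discCDF ψ L x := by
      refine Finset.sum_le_sum fun i _ => ?_
      have := hψ i
      by_cases h : L i < v
      · simp [h, hx i h]
      · simp only [h, if_false]; split_ifs <;> linarith
    have := (VaRcdf_le_iff hψ hs L hα.1 hα.2.le x).2 (by linarith)
    linarith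
  have hsum : (∑ i, if L i < v then ψ i else 0) + b + a = 1 := by
    rw [← hs, hb, ha, ← Finset.sum_add_distrib, ← Finset.sum_add_distrib]
    refine Finset.sum_congr rfl fun i _ => ?_
    rcases lt_trichotomy (L i) v with h | h | h
    · simp [h, h.ne, h.not_gt]
    · simp [h]
    · simp [h, h.ne', h.not_gt]
  obtain ⟨c, hc0, hc1, hc⟩ : ∃ c : ℝ, 0 ≤ c ∧ c ≤ 1 ∧ c * b = 1 - α - a := by
    rcases hb0.eq_or_lt with h | h
    · exact ⟨0, le_rfl, zero_le_one, by linarith⟩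
    · refine ⟨(1 - α - a) / b, div_nonneg (by linarith) hb0, ?_, div_mul_cancel₀ _ h.ne'⟩
      rw [div_le_one h]
      linarith
  set μ : ι → ℝ := fun i => (if v < L i then ψ i else 0) + c * (if L i = v then ψ i else 0) with hμ
  have hμs : ∑ i, μ i = 1 - α := by
    rw [hμ, Finset.sum_add_distrib, ← Finset.mul_sum, ← ha, ← hb, hc]
    ring
  refine ⟨μ, fun i => ?_, hμs, ?_⟩
  · have := hψ i
    rcases lt_trichotomy (L i) v with h | h | h
    · simp [hμ, h.ne, h.not_gt, this]
    · simp only [hμ, h, lt_irrefl, if_true, if_false, zero_add]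
      exact ⟨mul_nonneg hc0 this, mul_le_of_le_one_left this hc1⟩
    · simp [hμ, h, h.ne', this]
  · rw [integral_VaRcdf hψ hs L hα, ← hv, ← hμs, Finset.sum_mul, ← Finset.sum_add_distrib]
    refine Finset.sum_congr rfl fun i _ => ?_
    rcases lt_trichotomy (L i) v with h | h | h
    · simp [hμ, h.ne, h.not_gt, h.le]
    · simp [hμ, h, mul_comm]
    · simp only [hμ, h, h.ne', if_true, if_false, max_eq_left (sub_nonneg.2 h.le)]
      ring

end Discrete

/-! ### Fréchet class and linear program -/

lemma jointCDF_eq_discCDF {M N : ℕ} (ψ L : Fin M → Fin N → ℝ) :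
    jointCDF ψ L = discCDF (fun i : Fin M × Fin N => ψ i.1 i.2) (fun i => L i.1 i.2) := by
  funext x
  simp only [jointCDF, discCDF, Fintype.sum_prod_type]

/-- The feasible set of the linear program is compact: it is closed, and lies in a box because
`0 ≤ μ m n ≤ ψ m n ≤ p m`. -/
lemma isCompact_feasible {M N : ℕ} (α : ℝ) (p : Fin M → ℝ) (q : Fin N → ℝ) :
    IsCompact {x : (Fin M → Fin N → ℝ) × (Fin M → Fin N → ℝ) |
      (∀ m, ∑ n, x.1 m n = p m) ∧ (∀ n, ∑ m, x.1 m n = q n) ∧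
      (∑ m, ∑ n, x.2 m n = 1 - α) ∧ (∀ m n, 0 ≤ x.1 m n) ∧
      (∀ m n, 0 ≤ x.2 m n ∧ x.2 m n ≤ x.1 m n)} := by
  refine IsCompact.of_isClosed_subset
    (isCompact_Icc (a := 0) (b := ((fun m _ => p m, fun m _ => p m) :
      (Fin M → Fin N → ℝ) × (Fin M → Fin N → ℝ)))) ?_ ?_
  · simp only [Set.ofPred_and, Set.ofPred_forall]
    refine IsClosed.inter ?_ (IsClosed.inter ?_ (IsClosed.inter ?_ (IsClosed.inter ?_ ?_)))
    · exact isClosed_iInter fun m => isClosed_eq (by fun_prop) (by fun_prop)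
    · exact isClosed_iInter fun n => isClosed_eq (by fun_prop) (by fun_prop)
    · exact isClosed_eq (by fun_prop) (by fun_prop)
    · exact isClosed_iInter fun m => isClosed_iInter fun n =>
        isClosed_le (by fun_prop) (by fun_prop)
    · exact isClosed_iInter fun m => isClosed_iInter fun n =>
        (isClosed_le (by fun_prop) (by fun_prop)).inter (isClosed_le (by fun_prop) (by fun_prop))
  · rintro ⟨ψ, μ⟩ ⟨hp, -, -, h0, hμ⟩
    have hle : ∀ m n, ψ m n ≤ p m := fun m n => by
      rw [← hp m]
      exact Finset.single_le_sum (f := fun n => ψ m n) (fun n _ => h0 m n) (Finset.mem_univ n)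
    exact ⟨⟨fun m n => h0 m n, fun m n => (hμ m n).1⟩,
      ⟨fun m n => hle m n, fun m n => (hμ m n).2.trans (hle m n)⟩⟩

/-- The worst-case CVaR over the discrete Fréchet class with marginals `p` and `q`
equals the optimal value of the linear program (3), and both maxima are attained. -/
theorem worst_case_cvar_eq_lp {M N : ℕ} (hM : 0 < M) (hN : 0 < N)
    (α : ℝ) (hα : α ∈ Set.Ioo (0 : ℝ) 1)
    (p : Fin M → ℝ) (hp0 : ∀ m, 0 ≤ p m) (hp1 : ∑ m, p m = 1)
    (q : Fin N → ℝ) (hq0 : ∀ n, 0 ≤ q n) (hq1 : ∑ n, q n = 1)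
    (L : Fin M → Fin N → ℝ) :
    ∃ r : ℝ,
      IsGreatest
        {v : ℝ | ∃ ψ : Fin M → Fin N → ℝ,
          (∀ m n, 0 ≤ ψ m n) ∧ (∀ m, ∑ n, ψ m n = p m) ∧ (∀ n, ∑ m, ψ m n = q n) ∧
          v = CVaRcdf (jointCDF ψ L) α} r ∧
      IsGreatest
        {v : ℝ | ∃ ψ μ : Fin M → Fin N → ℝ,
          (∀ m, ∑ n, ψ m n = p m) ∧ (∀ n, ∑ m, ψ m n = q n) ∧
          (∑ m, ∑ n, μ m n = 1 - α) ∧ (∀ m n, 0 ≤ ψ m n) ∧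
          (∀ m n, 0 ≤ μ m n ∧ μ m n ≤ ψ m n) ∧
          v = (1 - α)⁻¹ * ∑ m, ∑ n, L m n * μ m n} r := by
  have hα1 : 0 < 1 - α := sub_pos.2 hα.2
  have hinv : 0 ≤ (1 - α)⁻¹ := (inv_pos.2 hα1).le
  have hprod : ∑ m, ∑ n, p m * q n = 1 := by
    simp [← Finset.mul_sum, hq1, hp1]
  have htot : ∀ ψ : Fin M → Fin N → ℝ, (∀ m, ∑ n, ψ m n = p m) →
      ∑ i : Fin M × Fin N, ψ i.1 i.2 = 1 := fun ψ h => by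
    simp only [Fintype.sum_prod_type, h, hp1]
  -- Maximize over the compact feasible set; the independent coupling shows it is nonempty.
  obtain ⟨⟨ψ, μ⟩, ⟨h1, h2, h3, h4, h5⟩, hmax⟩ :=
    (isCompact_feasible α p q).exists_isMaxOn
      ⟨(fun m n => p m * q n, fun m n => (1 - α) * (p m * q n)), by
        refine ⟨fun m => ?_, fun n => ?_, ?_, fun m n => mul_nonneg (hp0 m) (hq0 n),
          fun m n => ⟨?_, ?_⟩⟩
        · simp [← Finset.mul_sum, hq1]
        · simp [← Finset.sum_mul, hp1]
        · simp only [← Finset.mul_sum (a := 1 - α), hprod, mul_one]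
        · exact mul_nonneg hα1.le (mul_nonneg (hp0 m) (hq0 n))
        · exact mul_le_of_le_one_left (mul_nonneg (hp0 m) (hq0 n)) (by linarith [hα.1])⟩
      (f := fun x => (1 - α)⁻¹ * ∑ m, ∑ n, L m n * x.2 m n) (by fun_prop)
  -- By attainment of the tail integral for fixed `ψ'`, every CVaR is bounded by the LP value.
  have hub : ∀ ψ' : Fin M → Fin N → ℝ, (∀ m n, 0 ≤ ψ' m n) → (∀ m, ∑ n, ψ' m n = p m) →
      (∀ n, ∑ m, ψ' m n = q n) →
      CVaRcdf (jointCDF ψ' L) α ≤ (1 - α)⁻¹ * ∑ m, ∑ n, L m n * μ m n := by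
    intro ψ' k1 k2 k3
    obtain ⟨ν, e1, e2, e3⟩ := exists_sum_mul_eq_integral_VaRcdf
      (ψ := fun i : Fin M × Fin N => ψ' i.1 i.2) (fun i => k1 i.1 i.2) (htot ψ' k2)
      (fun i => L i.1 i.2) hα
    have hmem := hmax (a := (ψ', fun m n => ν (m, n)))
      ⟨k2, k3, by rw [← e2, Fintype.sum_prod_type], k1, fun m n => e1 (m, n)⟩
    rw [CVaRcdf, jointCDF_eq_discCDF, ← e3, Fintype.sum_prod_type]
    exact hmem
  refine ⟨(1 - α)⁻¹ * ∑ m, ∑ n, L m n * μ m n, ⟨⟨ψ, h4, h1, h2, ?_⟩, ?_⟩,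
    ⟨⟨ψ, μ, h1, h2, h3, h4, h5, rfl⟩, ?_⟩⟩
  · refine le_antisymm ?_ (hub ψ h4 h1 h2)
    have := sum_mul_le_integral_VaRcdf
      (ψ := fun i : Fin M × Fin N => ψ i.1 i.2) (fun i => h4 i.1 i.2) (htot ψ h1)
      (fun i => L i.1 i.2) hα (μ := fun i => μ i.1 i.2) (fun i => h5 i.1 i.2)
      (by rw [Fintype.sum_prod_type]; exact h3)
    rw [Fintype.sum_prod_type] at this
    rw [CVaRcdf, jointCDF_eq_discCDF]
    exact mul_le_mul_of_nonneg_left this hinv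
  · rintro _ ⟨ψ', k1, k2, k3, rfl⟩
    exact hub ψ' k1 k2 k3
  · rintro _ ⟨ψ', μ', k1, k2, k3, k4, k5, rfl⟩
    exact hmax (a := (ψ', μ')) ⟨k1, k2, k3, k4, k5⟩
end
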